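/- Fix a sign choice ±. For every k ∈ ℕ (k ≥ 1) and every α > 0, there exists a constant C = C(k, α) > 0 such that for every α-separated trigonometric polynomial f, ‖H_± f‖_{S^{2^k}} ≤ C ‖f‖_{S^{2^k}}. -/

import Mathlib

/-- A trigonometric polynomial `x ↦ Σ_{n<N} c_n e^{iλ_n x}` with strictly increasing real
exponents. -/
structure TrigPoly where
  N : ℕ
  c : ℕ → ℂ
  Λ : ℕ → ℝ
  mono : ∀ n, n + 1 < N → Λ n < Λ (n + 1)

/-- Evaluation of a trigonometric polynomial. -/
noncomputable def TrigPoly.eval (P : TrigPoly) (x : ℝ) : ℂ :=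
  ∑ n ∈ Finset.range P.N, P.c n * Complex.exp (Complex.I * (P.Λ n : ℂ) * (x : ℂ))

/-- `α`-separation of the exponents: `λ_{n+1} - λ_n > α`. -/
def TrigPoly.sep (P : TrigPoly) (α : ℝ) : Prop :=
  ∀ n, n + 1 < P.N → α < P.Λ (n + 1) - P.Λ n

/-- `sgnPM true` is `sgn₊` (value `1` at `0`); `sgnPM false` is `sgn₋` (value `-1` at `0`). -/
noncomputable def sgnPM (pos : Bool) (x : ℝ) : ℝ :=
  if pos then (if 0 ≤ x then 1 else -1) else (if 0 < x then 1 else -1)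

/-- The modified Hilbert transform `H_± f(x) = Σ_n (-i sgn_±(λ_n)) c_n e^{iλ_n x}`. -/
noncomputable def TrigPoly.hilb (pos : Bool) (P : TrigPoly) (x : ℝ) : ℂ :=
  ∑ n ∈ Finset.range P.N,
    (-Complex.I * (sgnPM pos (P.Λ n) : ℂ)) * P.c n
      * Complex.exp (Complex.I * (P.Λ n : ℂ) * (x : ℂ))

/-- The Stepanov norm `‖f‖_{S^p} = (sup_{x ∈ ℝ} ∫_x^{x+1} |f(s)|^p ds)^{1/p}` of a function
`f : ℝ → ℝ`. -/
noncomputable def stepanovNorm (p : ℝ) (f : ℝ → ℝ) : ℝ :=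
  (⨆ x : ℝ, ∫ s in x..(x + 1), |f s| ^ p) ^ (1 / p)

/-
After a modulation, `f = u + v` and `|H_± f| = |u - v|` with the frequencies of `u` in `[δ, ∞)` and
those of `v` in `(-∞, -δ]`. Then `u` and `v` are orthogonal for a translate of a weight whose
Fourier transform is supported in `(-δ, δ)`, so that `u - v` and `u + v` have the same weighted `L²`
norms; decay of the weight makes these comparable with unit-interval averages, which is the case
`p = 2`. Cotlar's identity passes from the exponent `p` to `2p`.
-/

open MeasureTheory Real Set
open scoped BoundedContinuousFunction SchwartzMap FourierTransform ComplexConjugate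

section SchwartzFourier

lemma exists_norm_sq_schwartz_le {E F : Type*} [NormedAddCommGroup E] [NormedSpace ℝ E]
    [NormedAddCommGroup F] [NormedSpace ℝ F] (g : 𝓢(E, F)) :
    ∃ K, ∀ x, ‖g x‖ ^ 2 ≤ K * (1 + ‖x‖ ^ 2)⁻¹ := by
  obtain ⟨A, -, hA⟩ := g.decay 0 0
  obtain ⟨B, -, hB⟩ := g.decay 1 0
  refine ⟨A ^ 2 + B ^ 2, fun x ↦ ?_⟩
  have hA' : ‖g x‖ ^ 2 ≤ A ^ 2 := by gcongr; simpa using hA x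
  have hB' : (‖x‖ * ‖g x‖) ^ 2 ≤ B ^ 2 := by gcongr; simpa using hB x
  rw [← div_eq_mul_inv, le_div_iff₀ (by positivity)]
  linarith

variable {V : Type*} [NormedAddCommGroup V] [InnerProductSpace ℝ V] [FiniteDimensional ℝ V]
  [MeasurableSpace V] [BorelSpace V]

lemma fourier_compSubConst (b : 𝓢(V, ℂ)) (a ξ : V) :
    𝓕 (b.compSubConstCLM ℂ a) ξ = 𝐞 (-inner ℝ a ξ) * 𝓕 b ξ := by
  have h := congrFun (VectorFourier.fourierIntegral_comp_add_right 𝐞 volume (innerₗ V) b (-a)) ξ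
  simpa [SchwartzMap.fourier_coe, Function.comp_def, sub_eq_add_neg, Circle.smul_def,
    Real.fourier_eq, VectorFourier.fourierIntegral] using h

lemma integral_norm_sq_fourier_mul_fourierChar (b : 𝓢(V, ℂ)) (a : V) :
    ∫ ξ, (‖𝓕 b ξ‖ ^ 2 : ℂ) * 𝐞 (-inner ℝ a ξ) = ∫ x, conj (b x) * b (x - a) := by
  have h := SchwartzMap.integral_inner_fourier_fourier b (b.compSubConstCLM ℂ a)
  simp only [fourier_compSubConst, RCLike.inner_apply', SchwartzMap.compSubConstCLM_apply] at h
  rw [← h]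
  congr 1 with ξ
  rw [← Complex.conj_mul']
  ring

lemma exists_schwartz_fourier_zero_ne_zero :
    ∃ b : 𝓢(ℝ, ℂ), (∀ x, 1 ≤ |x| → b x = 0) ∧ 𝓕 b 0 ≠ 0 := by
  let φ : ContDiffBump (0 : ℝ) := ⟨1 / 2, 1, by norm_num, by norm_num⟩
  have hsupp : HasCompactSupport fun x ↦ (φ x : ℂ) :=
    φ.hasCompactSupport.comp_left Complex.ofReal_zero
  refine ⟨hsupp.toSchwartzMap (Complex.ofRealCLM.contDiff.comp φ.contDiff), fun x hx ↦ ?_, ?_⟩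
  · exact congrArg Complex.ofReal (φ.zero_of_le_dist (by simpa [φ] using hx))
  · rw [SchwartzMap.fourier_coe, Real.fourier_real_eq_integral_exp_smul]
    suffices ∫ x, (φ x : ℂ) ≠ 0 by simpa
    rw [integral_complex_ofReal, Complex.ofReal_ne_zero]
    exact φ.integral_pos.ne'

end SchwartzFourier

section Spectrum

/-- The character `x ↦ e^{iξx}`, as a bounded continuous function. -/
noncomputable def expChar (ξ : ℝ) : ℝ →ᵇ ℂ :=
  BoundedContinuousFunction.char (L := LinearMap.mul ℝ ℝ) Real.continuous_probChar
    (by simpa using! continuous_mul) ξ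

lemma expChar_apply (ξ x : ℝ) : expChar ξ x = Complex.exp (Complex.I * ξ * x) := by
  simp only [expChar, BoundedContinuousFunction.char_apply, LinearMap.mul_apply', probChar_apply]
  push_cast
  ring_nf

lemma expChar_add (ξ η : ℝ) : expChar (ξ + η) = expChar ξ * expChar η :=
  BoundedContinuousFunction.char_add_eq_mul ..

lemma expChar_neg (ξ : ℝ) : expChar (-ξ) = star (expChar ξ) :=
  BoundedContinuousFunction.char_neg ..

lemma norm_expChar_apply (ξ x : ℝ) : ‖expChar ξ x‖ = 1 := by
  simpa only [expChar, BoundedContinuousFunction.char_apply] using Circle.norm_coe _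

/-- The space of trigonometric polynomials whose frequencies lie in `S`. -/
noncomputable def trigSpan (S : Set ℝ) : Submodule ℂ (ℝ →ᵇ ℂ) :=
  Submodule.span ℂ (expChar '' S)

variable {S T : Set ℝ} {f g : ℝ →ᵇ ℂ}

lemma expChar_mem_trigSpan {ξ : ℝ} (hξ : ξ ∈ S) : expChar ξ ∈ trigSpan S :=
  Submodule.subset_span (mem_image_of_mem _ hξ)

lemma trigSpan_mono (h : S ⊆ T) : trigSpan S ≤ trigSpan T :=
  Submodule.span_mono (image_mono h)

open scoped Pointwise in
lemma mul_mem_trigSpan (hf : f ∈ trigSpan S) (hg : g ∈ trigSpan T) :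
    f * g ∈ trigSpan (S + T) := by
  have h := Submodule.mul_mem_mul hf hg
  rw [trigSpan, trigSpan, Submodule.span_mul_span] at h
  refine Submodule.span_mono ?_ h
  rintro _ ⟨_, ⟨ξ, hξ, rfl⟩, _, ⟨η, hη, rfl⟩, rfl⟩
  exact ⟨ξ + η, add_mem_add hξ hη, expChar_add ξ η⟩

open scoped Pointwise in
lemma star_mem_trigSpan (hf : f ∈ trigSpan S) : star f ∈ trigSpan (-S) := by
  induction hf using Submodule.span_induction with
  | mem f hf =>
    obtain ⟨ξ, hξ, rfl⟩ := hf
    rw [← expChar_neg]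
    exact expChar_mem_trigSpan (neg_mem_neg.2 hξ)
  | zero => simp
  | add f g _ _ hf hg => simpa only [star_add] using add_mem hf hg
  | smul c f _ hf => simpa only [star_smul] using Submodule.smul_mem _ _ hf

lemma mul_mem_trigSpan_Ici {a b : ℝ} (hf : f ∈ trigSpan (Ici a)) (hg : g ∈ trigSpan (Ici b)) :
    f * g ∈ trigSpan (Ici (a + b)) :=
  trigSpan_mono (Ici_add_Ici_subset a b) (mul_mem_trigSpan hf hg)

lemma mul_mem_trigSpan_Iic {a b : ℝ} (hf : f ∈ trigSpan (Iic a)) (hg : g ∈ trigSpan (Iic b)) :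
    f * g ∈ trigSpan (Iic (a + b)) :=
  trigSpan_mono (Iic_add_Iic_subset a b) (mul_mem_trigSpan hf hg)

end Spectrum

section Weight

/-- A nonnegative weight that is bounded below on `[0, 1]`, decays like `(1 + x²)⁻¹` and is
orthogonal to every character of frequency at least `δ` in absolute value. Integrating against it
localises to a unit interval without destroying the orthogonality of separated frequencies. -/
structure BandlimitedWeight (δ : ℝ) where
  toFun : ℝ → ℝ
  continuous_toFun : Continuous toFun
  nonneg : ∀ x, 0 ≤ toFun x
  lower : ℝ
  lower_pos : 0 < lower
  lower_le : ∀ x ∈ Icc (0 : ℝ) 1, lower ≤ toFun x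
  upper : ℝ
  le_upper : ∀ x, toFun x ≤ upper * (1 + x ^ 2)⁻¹
  integral_mul_expChar : ∀ ξ, δ ≤ |ξ| → ∫ x, (toFun x : ℂ) * expChar ξ x = 0

lemma integral_norm_sq_fourier_comp_mul_expChar {b : 𝓢(ℝ, ℂ)} (hb : ∀ x, 1 ≤ |x| → b x = 0)
    {ρ ξ : ℝ} (hρ : 0 < ρ) (hξ : 4 * π * ρ ≤ |ξ|) :
    ∫ x, (‖𝓕 b (ρ * x)‖ ^ 2 : ℂ) * expChar ξ x = 0 := by
  set a : ℝ := -(ξ / (2 * π * ρ)) with ha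
  have ha2 : 2 ≤ |a| := by
    rw [ha, abs_neg, abs_div, abs_of_pos (by positivity : 0 < 2 * π * ρ),
      le_div_iff₀ (by positivity)]
    linarith
  have hexp (x : ℝ) : expChar ξ x = 𝐞 (-inner ℝ a (ρ * x)) := by
    rw [expChar_apply, Real.fourierChar_apply, ha]
    simp only [RCLike.inner_apply, conj_trivial]
    have hρ' : (ρ : ℂ) ≠ 0 := mod_cast hρ.ne'
    congr 1
    push_cast
    field_simp
  have hdisj (x : ℝ) : conj (b x) * b (x - a) = 0 := by
    rcases le_or_gt 1 |x| with hx | hx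
    · simp [hb x hx]
    · have hxa : 1 ≤ |x - a| := by linarith [abs_sub_abs_le_abs_sub a x, abs_sub_comm a x]
      simp [hb _ hxa]
  simp_rw [hexp]
  rw [Measure.integral_comp_mul_left (fun y ↦ (‖𝓕 b y‖ ^ 2 : ℂ) * 𝐞 (-inner ℝ a y)),
    integral_norm_sq_fourier_mul_fourierChar]
  simp_rw [hdisj, integral_zero, smul_zero]

/- The weight is `|𝓕 b(ρx)|²`: its Fourier transform is an autocorrelation of `b`, hence compactly
supported, and `ρ` small both narrows that support and makes the weight nearly constant
on `[0, 1]`. -/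
lemma nonempty_bandlimitedWeight {δ : ℝ} (hδ : 0 < δ) : Nonempty (BandlimitedWeight δ) := by
  obtain ⟨b, hb, hb0⟩ := exists_schwartz_fourier_zero_ne_zero
  obtain ⟨K, hK⟩ := exists_norm_sq_schwartz_le (𝓕 b)
  have hcont : Continuous fun y ↦ ‖𝓕 b y‖ ^ 2 := by fun_prop
  have hpos : 0 < ‖𝓕 b 0‖ ^ 2 := by positivity
  obtain ⟨r, hr, hlow⟩ := Metric.eventually_nhds_iff.1
    (hcont.continuousAt.eventually_const_le (half_lt_self hpos))
  obtain ⟨ρ, hρ, hρ'⟩ : ∃ ρ, 0 < ρ ∧ ρ < min (min r 1) (δ / (4 * π)) :=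
    exists_between (by positivity)
  obtain ⟨⟨hρr, hρ1⟩, hρδ⟩ := by simpa only [lt_min_iff] using hρ'
  rw [lt_div_iff₀ (by positivity)] at hρδ
  have hK0 : 0 < K := by simpa using hpos.trans_le (hK 0)
  refine ⟨⟨fun x ↦ ‖𝓕 b (ρ * x)‖ ^ 2, by fun_prop, fun x ↦ by positivity, _, half_pos hpos,
    fun x hx ↦ hlow ?_, K * (ρ ^ 2)⁻¹, fun x ↦ (hK _).trans ?_, fun ξ hξ ↦ ?_⟩⟩
  · rw [dist_zero_right, norm_mul, norm_of_nonneg hρ.le, norm_of_nonneg hx.1]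
    exact (mul_le_of_le_one_right hρ.le hx.2).trans_lt hρr
  · rw [mul_assoc, ← mul_inv]
    gcongr
    rw [norm_mul, mul_pow, norm_eq_abs, norm_eq_abs, sq_abs, sq_abs, mul_add, mul_one]
    gcongr
    exact pow_le_one₀ hρ.le hρ1.le
  · simpa using integral_norm_sq_fourier_comp_mul_expChar hb hρ (by linarith)

variable {δ : ℝ} (w : BandlimitedWeight δ)

namespace BandlimitedWeight

lemma upper_pos : 0 < w.upper := by
  simpa using (w.lower_pos.trans_le (w.lower_le 0 (by simp))).trans_le (w.le_upper 0)

lemma integrable : Integrable w.toFun :=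
  (integrable_inv_one_add_sq.const_mul w.upper).mono' w.continuous_toFun.aestronglyMeasurable
    (.of_forall fun x ↦ by simpa [abs_of_nonneg (w.nonneg x)] using w.le_upper x)

lemma integrable_mul_comp_add (f : ℝ →ᵇ ℂ) (x : ℝ) :
    Integrable fun y ↦ (w.toFun y : ℂ) * f (y + x) :=
  w.integrable.ofReal.mul_bdd (c := ‖f‖) (Continuous.aestronglyMeasurable (by fun_prop))
    (.of_forall fun y ↦ f.norm_coe_le_norm _)

lemma integrable_mul_norm_pow_comp_add (f : ℝ →ᵇ ℂ) (p : ℕ) (x : ℝ) :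
    Integrable fun y ↦ w.toFun y * ‖f (y + x)‖ ^ p :=
  w.integrable.mul_bdd (c := ‖f‖ ^ p) (Continuous.aestronglyMeasurable (by fun_prop))
    (.of_forall fun y ↦ by simpa using pow_le_pow_left₀ (norm_nonneg _) (f.norm_coe_le_norm _) p)

lemma integral_mul_comp_add_eq_zero {f : ℝ →ᵇ ℂ} (hf : f ∈ trigSpan {ξ | δ ≤ |ξ|}) (x : ℝ) :
    ∫ y, (w.toFun y : ℂ) * f (y + x) = 0 := by
  induction hf using Submodule.span_induction with
  | mem f hf =>
    obtain ⟨ξ, hξ, rfl⟩ := hf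
    have hadd (y : ℝ) : expChar ξ (y + x) = expChar ξ y * expChar ξ x := by
      simp only [expChar_apply, ← Complex.exp_add]
      push_cast
      ring_nf
    simp_rw [hadd, ← mul_assoc]
    rw [integral_mul_const, w.integral_mul_expChar ξ hξ, zero_mul]
  | zero => simp
  | add f g _ _ hf hg =>
    simp_rw [BoundedContinuousFunction.add_apply, mul_add]
    rw [integral_add (w.integrable_mul_comp_add f x) (w.integrable_mul_comp_add g x), hf, hg,
      add_zero]
  | smul c f _ hf =>
    simp_rw [BoundedContinuousFunction.smul_apply, smul_eq_mul, mul_left_comm _ c]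
    rw [integral_const_mul, hf, mul_zero]

lemma integral_norm_sq_sub_eq_add {u v : ℝ →ᵇ ℂ} (huv : u * star v ∈ trigSpan {ξ | δ ≤ |ξ|})
    (x : ℝ) :
    ∫ y, w.toFun y * ‖(u - v) (y + x)‖ ^ 2 = ∫ y, w.toFun y * ‖(u + v) (y + x)‖ ^ 2 := by
  have hpolar (y : ℝ) : w.toFun y * ‖(u + v) (y + x)‖ ^ 2 - w.toFun y * ‖(u - v) (y + x)‖ ^ 2
      = 4 * RCLike.re ((w.toFun y : ℂ) * (u * star v) (y + x)) := by
    simp only [BoundedContinuousFunction.add_apply, BoundedContinuousFunction.sub_apply,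
      BoundedContinuousFunction.mul_apply, BoundedContinuousFunction.star_apply,
      Complex.sq_norm, Complex.normSq_add, Complex.normSq_sub, RCLike.re_to_complex,
      Complex.re_ofReal_mul, RCLike.star_def]
    ring
  rw [eq_comm, ← sub_eq_zero, ← integral_sub (w.integrable_mul_norm_pow_comp_add _ 2 x)
    (w.integrable_mul_norm_pow_comp_add _ 2 x)]
  simp_rw [hpolar]
  rw [integral_const_mul, integral_re (w.integrable_mul_comp_add _ x),
    w.integral_mul_comp_add_eq_zero huv x, map_zero, mul_zero]

end BandlimitedWeight

end Weight

section StepanovPow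

/-- The `p`-th power of the Stepanov norm `‖f‖_{S^p}`, for a natural exponent and a bounded
continuous function, so that the supremum is a true one. -/
noncomputable def stepanovPow (p : ℕ) (f : ℝ →ᵇ ℂ) : ℝ :=
  ⨆ x : ℝ, ∫ y in x..(x + 1), ‖f y‖ ^ p

variable (p : ℕ) (f g : ℝ →ᵇ ℂ)

lemma stepanovNorm_norm_eq :
    stepanovNorm p (fun x ↦ ‖f x‖) = stepanovPow p f ^ (1 / (p : ℝ)) := by
  simp only [stepanovNorm, stepanovPow, abs_norm, rpow_natCast]

lemma intervalIntegrable_norm_pow (a b : ℝ) :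
    IntervalIntegrable (fun y ↦ ‖f y‖ ^ p) volume a b :=
  Continuous.intervalIntegrable (by fun_prop) a b

lemma intervalIntegral_le_stepanovPow (x : ℝ) :
    ∫ y in x..(x + 1), ‖f y‖ ^ p ≤ stepanovPow p f := by
  refine le_ciSup (f := fun x ↦ ∫ y in x..(x + 1), ‖f y‖ ^ p) ⟨‖f‖ ^ p, ?_⟩ x
  rintro _ ⟨x, rfl⟩
  have hle : ∫ y in x..(x + 1), ‖f y‖ ^ p ≤ ∫ _ in x..(x + 1), ‖f‖ ^ p :=
    intervalIntegral.integral_mono_on (by linarith) (intervalIntegrable_norm_pow p f _ _)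
      intervalIntegrable_const fun y _ ↦ by gcongr; exact f.norm_coe_le_norm y
  simpa using hle

lemma stepanovPow_nonneg : 0 ≤ stepanovPow p f :=
  Real.iSup_nonneg fun x ↦
    intervalIntegral.integral_nonneg (by linarith) fun _ _ ↦ by positivity

lemma stepanovPow_sq : stepanovPow p (f ^ 2) = stepanovPow (2 * p) f := by
  simp only [stepanovPow, BoundedContinuousFunction.coe_pow, Pi.pow_apply, norm_pow, pow_mul]

variable {p f g}

lemma stepanovPow_le_of_norm_pow_le {q r : ℕ} {h : ℝ →ᵇ ℂ} {a b : ℝ} (ha : 0 ≤ a) (hb : 0 ≤ b)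
    (hle : ∀ y, ‖h y‖ ^ p ≤ a * ‖f y‖ ^ q + b * ‖g y‖ ^ r) :
    stepanovPow p h ≤ a * stepanovPow q f + b * stepanovPow r g := by
  refine ciSup_le fun x ↦ ?_
  have hf := (intervalIntegrable_norm_pow q f x (x + 1)).const_mul a
  have hg := (intervalIntegrable_norm_pow r g x (x + 1)).const_mul b
  calc ∫ y in x..(x + 1), ‖h y‖ ^ p
      ≤ ∫ y in x..(x + 1), (a * ‖f y‖ ^ q + b * ‖g y‖ ^ r) :=
        intervalIntegral.integral_mono_on (by linarith) (intervalIntegrable_norm_pow p h _ _)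
          (hf.add hg) fun y _ ↦ hle y
    _ = a * (∫ y in x..(x + 1), ‖f y‖ ^ q) + b * ∫ y in x..(x + 1), ‖g y‖ ^ r := by
        rw [intervalIntegral.integral_add hf hg, intervalIntegral.integral_const_mul,
          intervalIntegral.integral_const_mul]
    _ ≤ a * stepanovPow q f + b * stepanovPow r g := by
        gcongr <;> exact intervalIntegral_le_stepanovPow _ _ x

lemma stepanovPow_sub_le :
    stepanovPow p (f - g) ≤ 2 ^ (p - 1) * stepanovPow p f + 2 ^ (p - 1) * stepanovPow p g :=
  stepanovPow_le_of_norm_pow_le (by positivity) (by positivity) fun y ↦ by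
    calc ‖f y - g y‖ ^ p ≤ (‖f y‖ + ‖g y‖) ^ p := by gcongr; exact norm_sub_le _ _
      _ ≤ 2 ^ (p - 1) * (‖f y‖ ^ p + ‖g y‖ ^ p) := add_pow_le (norm_nonneg _) (norm_nonneg _) p
      _ = _ := mul_add _ _ _

lemma stepanovPow_smul_le (c : ℂ) : stepanovPow p (c • f) ≤ ‖c‖ ^ p * stepanovPow p f := by
  simpa using stepanovPow_le_of_norm_pow_le (p := p) (f := f) (g := f) (r := p) (h := c • f)
    (pow_nonneg (norm_nonneg c) p) le_rfl fun y ↦ by simp [mul_pow]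

lemma stepanovPow_mul_le {t : ℝ} (ht : 0 < t) :
    stepanovPow p (f * g)
      ≤ t / 2 * stepanovPow (2 * p) f + t⁻¹ / 2 * stepanovPow (2 * p) g := by
  refine stepanovPow_le_of_norm_pow_le (by positivity) (by positivity) fun y ↦ ?_
  have hamgm : t / 2 * (‖f y‖ ^ p) ^ 2 + t⁻¹ / 2 * (‖g y‖ ^ p) ^ 2 - ‖f y‖ ^ p * ‖g y‖ ^ p
      = t⁻¹ / 2 * (t * ‖f y‖ ^ p - ‖g y‖ ^ p) ^ 2 := by
    field_simp
    ring
  have hnonneg : 0 ≤ t⁻¹ / 2 * (t * ‖f y‖ ^ p - ‖g y‖ ^ p) ^ 2 := by positivity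
  rw [BoundedContinuousFunction.mul_apply, norm_mul, mul_pow, mul_comm 2, pow_mul, pow_mul]
  linarith

lemma intervalIntegral_mul_inv_one_add_sq_le {F : ℝ → ℝ} (hF : LocallyIntegrable F)
    (hF0 : ∀ x, 0 ≤ F x) (n : ℝ) {y : ℝ} (hy : y ∈ Icc n (n + 1)) :
    ∫ x in n..(n + 1), F x * (1 + x ^ 2)⁻¹ ≤ 3 * (1 + y ^ 2)⁻¹ * ∫ x in n..(n + 1), F x := by
  have hFn : IntervalIntegrable F volume n (n + 1) :=
    (hF.integrableOn_isCompact isCompact_uIcc).intervalIntegrable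
  have hcont : Continuous fun x : ℝ ↦ (1 + x ^ 2)⁻¹ :=
    Continuous.inv₀ (by fun_prop) fun x ↦ by positivity
  rw [mul_comm, ← intervalIntegral.integral_mul_const]
  refine intervalIntegral.integral_mono_on (by linarith)
    (hFn.mul_continuousOn hcont.continuousOn) (hFn.mul_const _)
    fun x hx ↦ mul_le_mul_of_nonneg_left ?_ (hF0 x)
  rw [← div_eq_mul_inv, inv_eq_one_div, div_le_div_iff₀ (by positivity) (by positivity)]
  have hxy : (y - x) ^ 2 ≤ 1 := by
    rw [sq_le_one_iff_abs_le_one, abs_le]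
    constructor <;> linarith [hx.1, hx.2, hy.1, hy.2]
  nlinarith [sq_nonneg (y - 2 * x)]

/- On `[n, n + 1]` the factor `(1 + x²)⁻¹` is at most `3` times its mean over that interval, and
these means add up to `∫ (1 + y²)⁻¹ = π`. -/
lemma integral_mul_inv_one_add_sq_le {F : ℝ → ℝ} (hF : LocallyIntegrable F) (hF0 : ∀ x, 0 ≤ F x)
    (hintg : Integrable fun x ↦ F x * (1 + x ^ 2)⁻¹) {M : ℝ}
    (hM : ∀ n : ℤ, ∫ x in (n : ℝ)..(n + 1), F x ≤ M) :
    ∫ x, F x * (1 + x ^ 2)⁻¹ ≤ 3 * π * M := by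
  have hintg' : Integrable fun y : ℝ ↦ 3 * (1 + y ^ 2)⁻¹ * M :=
    (integrable_inv_one_add_sq.const_mul 3).mul_const M
  have hcell (n : ℤ) : ∫ x in (n : ℝ)..(n + 1), F x * (1 + x ^ 2)⁻¹
      ≤ ∫ y in (n : ℝ)..(n + 1), 3 * (1 + y ^ 2)⁻¹ * M := by
    refine (by simp : ∫ x in (n : ℝ)..(n + 1), F x * (1 + x ^ 2)⁻¹
      = ∫ _ in (n : ℝ)..(n + 1), ∫ x in (n : ℝ)..(n + 1), F x * (1 + x ^ 2)⁻¹).trans_le ?_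
    refine intervalIntegral.integral_mono_on (by linarith) intervalIntegrable_const
      hintg'.intervalIntegrable fun y hy ↦ ?_
    refine (intervalIntegral_mul_inv_one_add_sq_le hF hF0 n hy).trans ?_
    gcongr
    exact hM n
  calc ∫ x, F x * (1 + x ^ 2)⁻¹ ≤ ∫ y, 3 * (1 + y ^ 2)⁻¹ * M :=
        hasSum_le hcell (by simpa using hintg.hasSum_intervalIntegral 0)
          (by simpa using hintg'.hasSum_intervalIntegral 0)
    _ = 3 * π * M := by
        rw [integral_mul_const, integral_const_mul, integral_univ_inv_one_add_sq]

lemma integrable_norm_pow_comp_add_mul_inv (f : ℝ →ᵇ ℂ) (p : ℕ) (x : ℝ) :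
    Integrable fun y ↦ ‖f (y + x)‖ ^ p * (1 + y ^ 2)⁻¹ :=
  integrable_inv_one_add_sq.bdd_mul (c := ‖f‖ ^ p) (Continuous.aestronglyMeasurable (by fun_prop))
    (.of_forall fun y ↦ by simpa using pow_le_pow_left₀ (norm_nonneg _) (f.norm_coe_le_norm _) p)

lemma integral_norm_pow_comp_add_mul_inv_le (f : ℝ →ᵇ ℂ) (p : ℕ) (x : ℝ) :
    ∫ y, ‖f (y + x)‖ ^ p * (1 + y ^ 2)⁻¹ ≤ 3 * π * stepanovPow p f := by
  have hcont : Continuous fun y ↦ ‖f (y + x)‖ ^ p := by fun_prop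
  refine integral_mul_inv_one_add_sq_le hcont.locallyIntegrable (fun y ↦ by positivity)
    (integrable_norm_pow_comp_add_mul_inv f p x) fun n ↦ ?_
  rw [intervalIntegral.integral_comp_add_right (fun y ↦ ‖f y‖ ^ p), add_right_comm]
  exact intervalIntegral_le_stepanovPow p f _

end StepanovPow

section HilbertTransform

namespace BandlimitedWeight

variable {δ : ℝ} (w : BandlimitedWeight δ)

lemma integral_mul_norm_pow_comp_add_le (f : ℝ →ᵇ ℂ) (p : ℕ) (x : ℝ) :
    ∫ y, w.toFun y * ‖f (y + x)‖ ^ p ≤ w.upper * (3 * π) * stepanovPow p f :=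
  calc ∫ y, w.toFun y * ‖f (y + x)‖ ^ p
      ≤ ∫ y, w.upper * (‖f (y + x)‖ ^ p * (1 + y ^ 2)⁻¹) := by
        refine integral_mono (w.integrable_mul_norm_pow_comp_add f p x)
          ((integrable_norm_pow_comp_add_mul_inv f p x).const_mul _) fun y ↦ ?_
        rw [mul_left_comm, mul_comm]
        gcongr
        exact w.le_upper y
    _ ≤ w.upper * (3 * π * stepanovPow p f) := by
        rw [integral_const_mul]
        gcongr
        · exact w.upper_pos.le
        · exact integral_norm_pow_comp_add_mul_inv_le f p x
    _ = w.upper * (3 * π) * stepanovPow p f := by ring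

lemma lower_mul_stepanovPow_le {f : ℝ →ᵇ ℂ} {p : ℕ} {M : ℝ}
    (hM : ∀ x, ∫ y, w.toFun y * ‖f (y + x)‖ ^ p ≤ M) : w.lower * stepanovPow p f ≤ M := by
  rw [← le_div_iff₀' w.lower_pos]
  refine ciSup_le fun x ↦ (le_div_iff₀' w.lower_pos).2 ?_
  have hintg := w.integrable_mul_norm_pow_comp_add f p x
  calc w.lower * ∫ y in x..(x + 1), ‖f y‖ ^ p
      = ∫ y in (0 : ℝ)..1, w.lower * ‖f (y + x)‖ ^ p := by
        rw [intervalIntegral.integral_const_mul,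
          intervalIntegral.integral_comp_add_right (fun y ↦ ‖f y‖ ^ p), zero_add, add_comm 1 x]
    _ ≤ ∫ y in (0 : ℝ)..1, w.toFun y * ‖f (y + x)‖ ^ p := by
        refine intervalIntegral.integral_mono_on zero_le_one
          (Continuous.intervalIntegrable (by fun_prop) _ _) hintg.intervalIntegrable fun y hy ↦ ?_
        gcongr
        exact w.lower_le y hy
    _ ≤ ∫ y, w.toFun y * ‖f (y + x)‖ ^ p := by
        rw [intervalIntegral.integral_of_le zero_le_one]
        exact setIntegral_le_integral hintg
          (.of_forall fun y ↦ mul_nonneg (w.nonneg y) (by positivity))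
    _ ≤ M := hM x

end BandlimitedWeight

/-- Boundedness on `S^p` of the Hilbert transform of trigonometric polynomials `u + v` with no
frequency in `(-δ, δ)`, where `u` and `v` are the parts with positive and with negative
frequencies. The factor `-i` in `H (u + v) = -i (u - v)` is dropped. -/
def StepanovHilbertBound (δ : ℝ) (p : ℕ) : Prop :=
  ∃ C : ℝ, 0 < C ∧ ∀ u ∈ trigSpan (Ici δ), ∀ v ∈ trigSpan (Iic (-δ)),
    stepanovPow p (u - v) ≤ C * stepanovPow p (u + v)

variable {δ : ℝ}

lemma stepanovHilbertBound_two (hδ : 0 < δ) : StepanovHilbertBound δ 2 := by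
  obtain ⟨w⟩ := nonempty_bandlimitedWeight hδ
  refine ⟨w.upper * (3 * π) / w.lower,
    div_pos (mul_pos w.upper_pos (by positivity)) w.lower_pos, fun u hu v hv ↦ ?_⟩
  have huv : u * star v ∈ trigSpan {ξ | δ ≤ |ξ|} := by
    have hv' : star v ∈ trigSpan (Ici δ) := by simpa using star_mem_trigSpan hv
    refine trigSpan_mono (fun ξ hξ ↦ ?_) (mul_mem_trigSpan_Ici hu hv')
    exact (by linarith [mem_Ici.1 hξ] : δ ≤ ξ).trans (le_abs_self ξ)
  rw [div_mul_eq_mul_div, le_div_iff₀' w.lower_pos]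
  refine w.lower_mul_stepanovPow_le fun x ↦ ?_
  rw [w.integral_norm_sq_sub_eq_add huv]
  exact w.integral_mul_norm_pow_comp_add_le _ 2 x

/- Cotlar's trick: `u² + v²` is the Hilbert transform of `u² - v² = (u + v)(u - v)`, while
`(u - v)² = 2(u² + v²) - (u + v)²`. The term in `u - v` that this produces on the right-hand side
is absorbed on the left by the choice of the parameter in Young's inequality. -/
lemma StepanovHilbertBound.two_mul (hδ : 0 ≤ δ) {p : ℕ} (h : StepanovHilbertBound δ p) :
    StepanovHilbertBound δ (2 * p) := by
  obtain ⟨C, hC, hbound⟩ := h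
  set a : ℝ := 2 ^ (p - 1)
  set A : ℝ := a * 2 ^ p * C
  have hA : 0 < A := by positivity
  refine ⟨A ^ 2 + 2 * a, by positivity, fun u hu v hv ↦ ?_⟩
  set M := stepanovPow (2 * p) (u + v)
  set N := stepanovPow (2 * p) (u - v)
  have hu2 : u ^ 2 ∈ trigSpan (Ici δ) := by
    rw [sq]
    exact trigSpan_mono (Ici_subset_Ici.2 (by linarith)) (mul_mem_trigSpan_Ici hu hu)
  have hv2 : -v ^ 2 ∈ trigSpan (Iic (-δ)) := by
    rw [sq]
    exact neg_mem (trigSpan_mono (Iic_subset_Iic.2 (by linarith)) (mul_mem_trigSpan_Iic hv hv))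
  have hfactor : u ^ 2 + -v ^ 2 = (u + v) * (u - v) := by ring
  have hexpand : (u - v) ^ 2 = (2 : ℂ) • (u ^ 2 + v ^ 2) - (u + v) ^ 2 := by
    rw [two_smul]
    ring
  have hsq : stepanovPow p (u ^ 2 + v ^ 2) ≤ C * (A / 2 * M + A⁻¹ / 2 * N) :=
    calc stepanovPow p (u ^ 2 + v ^ 2) = stepanovPow p (u ^ 2 - -v ^ 2) := by rw [sub_neg_eq_add]
      _ ≤ C * stepanovPow p (u ^ 2 + -v ^ 2) := hbound _ hu2 _ hv2
      _ = C * stepanovPow p ((u + v) * (u - v)) := by rw [hfactor]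
      _ ≤ C * (A / 2 * M + A⁻¹ / 2 * N) := by gcongr; exact stepanovPow_mul_le hA
  have hN : N ≤ A * (A / 2 * M + A⁻¹ / 2 * N) + a * M :=
    calc N = stepanovPow p ((2 : ℂ) • (u ^ 2 + v ^ 2) - (u + v) ^ 2) := by
          rw [← hexpand, stepanovPow_sq]
      _ ≤ a * stepanovPow p ((2 : ℂ) • (u ^ 2 + v ^ 2)) + a * stepanovPow p ((u + v) ^ 2) :=
          stepanovPow_sub_le
      _ ≤ a * (2 ^ p * (C * (A / 2 * M + A⁻¹ / 2 * N))) + a * M := by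
          rw [stepanovPow_sq]
          gcongr
          exact (stepanovPow_smul_le 2).trans (by simpa using by gcongr)
      _ = A * (A / 2 * M + A⁻¹ / 2 * N) + a * M := by ring
  have habsorb : A * (A / 2 * M + A⁻¹ / 2 * N) = A ^ 2 / 2 * M + N / 2 := by field_simp
  linarith

lemma stepanovHilbertBound_two_pow (hδ : 0 < δ) {k : ℕ} (hk : 1 ≤ k) :
    StepanovHilbertBound δ (2 ^ k) := by
  induction k, hk using Nat.le_induction with
  | base => simpa using stepanovHilbertBound_two hδ
  | succ k _ ih => simpa only [pow_succ'] using ih.two_mul hδ.le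

end HilbertTransform

section SignSplitting

lemma sgnPM_eq_one_or_eq_neg_one (pos : Bool) (x : ℝ) : sgnPM pos x = 1 ∨ sgnPM pos x = -1 := by
  unfold sgnPM
  split_ifs <;> simp

lemma sgnPM_monotone (pos : Bool) : Monotone (sgnPM pos) := by
  intro x y hxy
  unfold sgnPM
  split_ifs <;> linarith

namespace TrigPoly

variable {P : TrigPoly} {α : ℝ} {pos : Bool}

lemma monotoneOn_Λ (P : TrigPoly) : MonotoneOn P.Λ (Iio P.N) :=
  monotoneOn_of_le_succ ordConnected_Iio fun n _ _ hn ↦ (P.mono n hn).le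

/-- The frequencies of sign `-1` lie at distance at least `α` from those of sign `1`. Within each of
the two groups they may be arbitrarily close, so this is weaker than `α`-separation. -/
def SignGap (P : TrigPoly) (pos : Bool) (α : ℝ) : Prop :=
  ∀ m < P.N, ∀ n < P.N, sgnPM pos (P.Λ m) < sgnPM pos (P.Λ n) → α ≤ P.Λ n - P.Λ m

lemma sep.signGap (h : P.sep α) (pos : Bool) : P.SignGap pos α := by
  intro m hm n hn hlt
  have hmn : m < n := by
    by_contra! hnm
    exact hlt.not_ge (sgnPM_monotone pos (P.monotoneOn_Λ hn hm hnm))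
  linarith [h m (by lia), P.monotoneOn_Λ (mem_Iio.2 (by lia : m + 1 < P.N)) hn hmn]

lemma SignGap.exists_cut (hα : 0 < α) (h : P.SignGap pos α) :
    ∃ t, ∀ n < P.N, (sgnPM pos (P.Λ n) = 1 → α / 4 ≤ P.Λ n - t) ∧
      (sgnPM pos (P.Λ n) = -1 → P.Λ n - t ≤ -(α / 4)) := by
  let lo := {n ∈ Finset.range P.N | sgnPM pos (P.Λ n) = -1}.image fun n ↦ P.Λ n + α / 4
  let hi := {n ∈ Finset.range P.N | sgnPM pos (P.Λ n) = 1}.image fun n ↦ P.Λ n - α / 4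
  obtain ⟨t, hlo, hhi⟩ : ∃ t, (∀ x ∈ lo, x < t) ∧ ∀ y ∈ hi, t < y := by
    refine Order.exists_between_finsets lo hi ?_
    simp only [lo, hi, Finset.forall_mem_image, Finset.mem_filter, Finset.mem_range]
    rintro m ⟨hm, hsm⟩ n ⟨hn, hsn⟩
    linarith [h m hm n hn (by rw [hsm, hsn]; norm_num)]
  simp only [lo, hi, Finset.forall_mem_image, Finset.mem_filter, Finset.mem_range] at hlo hhi
  exact ⟨t, fun n hn ↦ ⟨fun hs ↦ by linarith [hhi ⟨hn, hs⟩], fun hs ↦ by linarith [hlo ⟨hn, hs⟩]⟩⟩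

end TrigPoly

lemma norm_sum_mul_exp_eq_norm_sum_expChar {ι : Type*} (s : Finset ι) (a : ι → ℂ) (Λ : ι → ℝ)
    (t x : ℝ) :
    ‖∑ n ∈ s, a n * Complex.exp (Complex.I * Λ n * x)‖
      = ‖(∑ n ∈ s, a n • expChar (Λ n - t)) x‖ := by
  have hmod (ξ : ℝ) : Complex.exp (Complex.I * ξ * x) = expChar t x * expChar (ξ - t) x := by
    rw [← BoundedContinuousFunction.mul_apply, ← expChar_add, add_sub_cancel, expChar_apply]
  simp_rw [hmod, mul_left_comm (a _), ← Finset.mul_sum]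
  rw [norm_mul, norm_expChar_apply, one_mul]
  simp

/- Modulating by `e^{-itx}`, with `t` in the middle of the gap, makes the two half spectra symmetric
about `0` without changing absolute values. -/
lemma TrigPoly.SignGap.exists_splitting {P : TrigPoly} {pos : Bool} {α : ℝ} (hα : 0 < α)
    (h : P.SignGap pos α) :
    ∃ u ∈ trigSpan (Ici (α / 4)), ∃ v ∈ trigSpan (Iic (-(α / 4))),
      (∀ x, ‖P.eval x‖ = ‖(u + v) x‖) ∧ ∀ x, ‖P.hilb pos x‖ = ‖(u - v) x‖ := by
  obtain ⟨t, ht⟩ := h.exists_cut hα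
  let σ (n : ℕ) : ℂ := sgnPM pos (P.Λ n)
  let e (n : ℕ) : ℝ →ᵇ ℂ := expChar (P.Λ n - t)
  have hadd (z c : ℂ) : (1 + z) / 2 * c + (1 - z) / 2 * c = c := by ring
  have hsub (z c : ℂ) : (1 + z) / 2 * c - (1 - z) / 2 * c = z * c := by ring
  refine ⟨∑ n ∈ Finset.range P.N, ((1 + σ n) / 2 * P.c n) • e n, sum_mem fun n hn ↦ ?_,
    ∑ n ∈ Finset.range P.N, ((1 - σ n) / 2 * P.c n) • e n, sum_mem fun n hn ↦ ?_,
    fun x ↦ ?_, fun x ↦ ?_⟩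
  · rcases sgnPM_eq_one_or_eq_neg_one pos (P.Λ n) with hs | hs
    · exact Submodule.smul_mem _ _
        (expChar_mem_trigSpan ((ht n (Finset.mem_range.1 hn)).1 hs))
    · simp [σ, hs]
  · rcases sgnPM_eq_one_or_eq_neg_one pos (P.Λ n) with hs | hs
    · simp [σ, hs]
    · exact Submodule.smul_mem _ _
        (expChar_mem_trigSpan ((ht n (Finset.mem_range.1 hn)).2 hs))
  · rw [TrigPoly.eval, norm_sum_mul_exp_eq_norm_sum_expChar _ _ _ t, ← Finset.sum_add_distrib]
    simp_rw [← add_smul, hadd, e]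
  · simp_rw [TrigPoly.hilb, mul_assoc (-Complex.I), ← Finset.mul_sum]
    rw [norm_mul, norm_neg, Complex.norm_I, one_mul,
      norm_sum_mul_exp_eq_norm_sum_expChar _ _ _ t, ← Finset.sum_sub_distrib]
    simp_rw [← sub_smul, hsub, e, σ]

end SignSplitting

theorem stmt_10_general (pos : Bool) {k : ℕ} (hk : 1 ≤ k) {α : ℝ} (hα : 0 < α) :
    ∃ C : ℝ, 0 < C ∧ ∀ P : TrigPoly, P.SignGap pos α →
      stepanovNorm ((2 : ℝ) ^ k) (fun s => ‖TrigPoly.hilb pos P s‖)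
        ≤ C * stepanovNorm ((2 : ℝ) ^ k) (fun s => ‖P.eval s‖) := by
  obtain ⟨C, hC, hbound⟩ := stepanovHilbertBound_two_pow (show 0 < α / 4 by positivity) hk
  refine ⟨C ^ (1 / ((2 ^ k : ℕ) : ℝ)), by positivity, fun P hP ↦ ?_⟩
  obtain ⟨u, hu, v, hv, heval, hhilb⟩ := hP.exists_splitting hα
  have hexp : (2 : ℝ) ^ k = (2 ^ k : ℕ) := by push_cast; rfl
  simp_rw [heval, hhilb, hexp, stepanovNorm_norm_eq]
  rw [← mul_rpow hC.le (stepanovPow_nonneg _ _)]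
  exact rpow_le_rpow (stepanovPow_nonneg _ _) (hbound u hu v hv) (by positivity)

/-- Boundedness of the modified Hilbert transforms on `S^{2^k}`: for every `k ≥ 1` and `α > 0`
there is `C = C(k, α) > 0` with `‖H_± f‖_{S^{2^k}} ≤ C ‖f‖_{S^{2^k}}` for every `α`-separated
trigonometric polynomial `f`. -/
theorem stmt_10 (pos : Bool) (k : ℕ) (hk : 1 ≤ k) (α : ℝ) (hα : 0 < α) :
    ∃ C : ℝ, 0 < C ∧ ∀ P : TrigPoly, P.sep α →
      stepanovNorm ((2 : ℝ) ^ k) (fun s => ‖TrigPoly.hilb pos P s‖)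
        ≤ C * stepanovNorm ((2 : ℝ) ^ k) (fun s => ‖P.eval s‖) := by
  obtain ⟨C, hC, hbound⟩ := stmt_10_general pos hk hα
  exact ⟨C, hC, fun P hP ↦ hbound P (hP.signGap pos)⟩
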